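/- For every K ∈ T^d, the part of the spectrum of H(K) lying outside Σ_K consists only of isolated eigenvalues of finite multiplicity, i.e. σ(H(K)) \ Σ_K ⊆ σ_disc(H(K)); in particular σ_ess(H(K)) ⊆ Σ_K. -/

import Mathlib

open MeasureTheory Complex Filter Topology Set

noncomputable section

instance fact2pi : Fact (0 < 2 * Real.pi) := ⟨by positivity⟩

/-- The d-dimensional torus `(-π, π]^d` with its Haar (Lebesgue) measure. -/
abbrev Td (d : ℕ) : Type := Fin d → AddCircle (2 * Real.pi)

/-- The Hilbert space `L²(T^d)`. -/
abbrev L2 (d : ℕ) := Lp ℂ 2 (volume : Measure (Td d))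

/-- The Hilbert space `L²((T^d)²)`. -/
abbrev L2two (d : ℕ) := Lp ℂ 2 (volume : Measure (Td d × Td d))

/-- The swap map on `L²((T^d)²)`, `(S f)(p,q) = f(q,p)`. -/
def swapL (d : ℕ) : L2two d →ₗ[ℂ] L2two d :=
  Lp.compMeasurePreservingₗ ℂ Prod.swap MeasureTheory.Measure.measurePreserving_swap

/-- The subspace `L²_sym((T^d)²)` of symmetric functions, as the fixed-point space of swap. -/
def symSub (d : ℕ) : Submodule ℂ (L2two d) := LinearMap.ker (swapL d - LinearMap.id)

abbrev L2sym (d : ℕ) := ↥(symSub d)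

instance (d : ℕ) : CompleteSpace (L2sym d) := by
  have hiso : Isometry (swapL d) :=
    Lp.isometry_compMeasurePreserving MeasureTheory.Measure.measurePreserving_swap
  have hcl : IsClosed ((symSub d : Set (L2two d))) := by
    have h1 : (symSub d : Set (L2two d)) = {f | swapL d f = f} := by
      ext f
      simp [symSub, LinearMap.mem_ker, sub_eq_zero, LinearMap.sub_apply]
    rw [h1]
    exact isClosed_eq hiso.continuous continuous_id
  exact hcl.completeSpace_coe

/-- The Hilbert space `H = ℂ ⊕ L²(T^d) ⊕ L²_sym((T^d)²)`. -/
abbrev H3 (d : ℕ) := WithLp 2 (ℂ × WithLp 2 (L2 d × L2sym d))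

/-- The zero-particle component. -/
def p0 {d : ℕ} (f : H3 d) : ℂ := (WithLp.equiv 2 _ f).1

/-- The one-particle component. -/
def p1 {d : ℕ} (f : H3 d) : L2 d := (WithLp.equiv 2 _ ((WithLp.equiv 2 _ f).2)).1

/-- The two-particle component, as an element of `L²((T^d)²)`. -/
def p2 {d : ℕ} (f : H3 d) : L2two d :=
  ((WithLp.equiv 2 _ ((WithLp.equiv 2 _ f).2)).2 : L2sym d)

/-- The essential spectrum of a bounded operator on a Hilbert space, via the Weyl criterion:
`λ ∈ σ_ess(A)` iff there is an orthonormal (singular) sequence `u` with `‖(A - λ)uₙ‖ → 0`. -/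
def essSpec {H' : Type*} [NormedAddCommGroup H'] [InnerProductSpace ℂ H']
    (A : H' →L[ℂ] H') : Set ℂ :=
  {l | ∃ u : ℕ → H', Orthonormal ℂ u ∧
        Tendsto (fun n => ‖A (u n) - l • u n‖) atTop (𝓝 0)}

/-- The discrete spectrum of a bounded operator: the set of isolated eigenvalues of finite
multiplicity. -/
def discSpec {H' : Type*} [NormedAddCommGroup H'] [InnerProductSpace ℂ H']
    (A : H' →L[ℂ] H') : Set ℂ :=
  {z | (∃ f, f ≠ 0 ∧ A f = z • f) ∧ z ∉ closure (spectrum ℂ A \ {z}) ∧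
       FiniteDimensional ℂ (LinearMap.ker ((A - z • (1 : H' →L[ℂ] H') : H' →L[ℂ] H') : H' →ₗ[ℂ] H'))}

variable {d : ℕ}

/-- `E_min(K,k) = min_q w₂(K; k, q)`. -/
def Emin (w₂ : Td d → Td d → Td d → ℝ) (K k : Td d) : ℝ := ⨅ q, w₂ K k q

/-- `E_max(K,k) = max_q w₂(K; k, q)`. -/
def Emax (w₂ : Td d → Td d → Td d → ℝ) (K k : Td d) : ℝ := ⨆ q, w₂ K k q

/-- `m_K = min_{p,q} w₂(K; p, q)`. -/
def mK (w₂ : Td d → Td d → Td d → ℝ) (K : Td d) : ℝ := ⨅ x : Td d × Td d, w₂ K x.1 x.2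

/-- `M_K = max_{p,q} w₂(K; p, q)`. -/
def MK (w₂ : Td d → Td d → Td d → ℝ) (K : Td d) : ℝ := ⨆ x : Td d × Td d, w₂ K x.1 x.2

/-- The Fredholm determinant
`Δ_K(k; z) = w₁(K,k) − z − (1/2) ∫ v₁(t)² / (w₂(K;k,t) − z) dt`. -/
def Delta (v₁ : Td d → ℝ) (w₁ : Td d → Td d → ℝ) (w₂ : Td d → Td d → Td d → ℝ)
    (K k : Td d) (z : ℂ) : ℂ :=
  (w₁ K k : ℂ) - z - (1 / 2) * ∫ t, (v₁ t : ℂ) ^ 2 / ((w₂ K k t : ℂ) - z)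

/-- The interval `[E_min(K,k), E_max(K,k)]`, viewed inside `ℂ`. -/
def bandKk (w₂ : Td d → Td d → Td d → ℝ) (K k : Td d) : Set ℂ :=
  Complex.ofReal '' Set.Icc (Emin w₂ K k) (Emax w₂ K k)

/-- The interval `[m_K, M_K]`, viewed inside `ℂ`. -/
def bigBand (w₂ : Td d → Td d → Td d → ℝ) (K : Td d) : Set ℂ :=
  Complex.ofReal '' Set.Icc (mK w₂ K) (MK w₂ K)

/-- The two-particle branch
`Λ_K = {z : ∃ k, z ∉ [E_min(K,k), E_max(K,k)] ∧ Δ_K(k; z) = 0}`. -/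
def LamK (v₁ : Td d → ℝ) (w₁ : Td d → Td d → ℝ) (w₂ : Td d → Td d → Td d → ℝ)
    (K : Td d) : Set ℂ :=
  {z | ∃ k, z ∉ bandKk w₂ K k ∧ Delta v₁ w₁ w₂ K k z = 0}

/-- `Σ_K = [m_K, M_K] ∪ Λ_K`. -/
def SigK (v₁ : Td d → ℝ) (w₁ : Td d → Td d → ℝ) (w₂ : Td d → Td d → Td d → ℝ)
    (K : Td d) : Set ℂ :=
  bigBand w₂ K ∪ LamK v₁ w₁ w₂ K

/-- The defining equations of the `3×3` operator matrix `H(K)` acting on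
`ℂ ⊕ L²(T^d) ⊕ L²_sym((T^d)²)`:
`(H f)₀ = w₀(K) f₀ + ∫ v₀(t) f₁(t) dt`,
`(H f)₁(p) = v₀(p) f₀ + w₁(K; p) f₁(p) + ∫ v₁(t) f₂(p,t) dt`,
`(H f)₂(p,q) = (1/2)(v₁(p) f₁(q) + v₁(q) f₁(p)) + w₂(K; p,q) f₂(p,q)`. -/
def IsHamiltonian {d : ℕ} (w₀ v₀ v₁ : Td d → ℝ) (w₁ : Td d → Td d → ℝ)
    (w₂ : Td d → Td d → Td d → ℝ) (K : Td d) (H : H3 d →L[ℂ] H3 d) : Prop :=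
  ∀ f : H3 d,
    (p0 (H f) = (w₀ K : ℂ) * p0 f + (∫ t, (v₀ t : ℂ) * (p1 f) t)) ∧
    (⇑(p1 (H f)) =ᵐ[volume] fun p =>
        (v₀ p : ℂ) * p0 f + (w₁ K p : ℂ) * (p1 f) p +
          (∫ t, (v₁ t : ℂ) * (p2 f) (p, t))) ∧
    (⇑(p2 (H f)) =ᵐ[volume] fun x : Td d × Td d =>
        ((v₁ x.1 : ℂ) * (p1 f) x.2 + (v₁ x.2 : ℂ) * (p1 f) x.1) / 2 +
          (w₂ K x.1 x.2 : ℂ) * (p2 f) x)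


section AbstractPart

variable {E : Type*} [NormedAddCommGroup E] [InnerProductSpace ℂ E]

lemma seq_compact (A L C : E →L[ℂ] E) (hC : IsCompactOperator C) (z : ℂ)
    (h : ∀ f, f = L (A f - z • f) + C f) (u : ℕ → E) (hu : ∀ n, ‖u n‖ ≤ 1)
    (hlim : Tendsto (fun n => A (u n) - z • u n) atTop (𝓝 0)) :
    ∃ (a : E) (φ : ℕ → ℕ), StrictMono φ ∧ Tendsto (fun n => u (φ n)) atTop (𝓝 a) := by
  have hc := hC.isCompact_closure_image_closedBall (f := (C : E →ₗ[ℂ] E)) (r := 1)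
  obtain ⟨a, _, φ, hφ, hl⟩ := hc.tendsto_subseq (x := fun n => C (u n)) (fun n => by
    apply subset_closure
    exact ⟨u n, by simpa using hu n, rfl⟩)
  refine ⟨a, φ, hφ, ?_⟩
  have h1 : Tendsto (fun n => L (A (u (φ n)) - z • u (φ n)) + C (u (φ n))) atTop (𝓝 (L 0 + a)) :=
    ((L.continuous.tendsto 0).comp (hlim.comp hφ.tendsto_atTop)).add hl
  simp only [map_zero, zero_add] at h1
  refine h1.congr (fun n => (h _).symm)

lemma not_ess (A L C : E →L[ℂ] E) (hC : IsCompactOperator C) (z : ℂ)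
    (h : ∀ f, f = L (A f - z • f) + C f) : z ∉ essSpec A := by
  rintro ⟨u, hu, hlim⟩
  obtain ⟨a, φ, hφ, hl⟩ := seq_compact A L C hC z h u (fun n => (hu.1 n).le)
    (tendsto_zero_iff_norm_tendsto_zero.2 hlim)
  have hcau := hl.cauchySeq
  rw [Metric.cauchySeq_iff'] at hcau
  obtain ⟨N, hN⟩ := hcau 1 one_pos
  have h1 := hN (N+1) (by omega)
  rw [dist_eq_norm] at h1
  have hne : φ (N+1) ≠ φ N := (hφ (Nat.lt_succ_self N)).ne'
  have h2 : ‖u (φ (N+1)) - u (φ N)‖ ^ 2 = 2 := by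
    rw [@norm_sub_sq ℂ, hu.2 hne, hu.1, hu.1]; norm_num
  nlinarith [norm_nonneg (u (φ (N+1)) - u (φ N))]

lemma isUnit_of_lower [CompleteSpace E] (T : E →L[ℂ] E) (hT : IsSelfAdjoint T) (c : ℝ) (hc : 0 < c)
    (h : ∀ x, ‖x‖ ≤ c * ‖T x‖) : IsUnit T := by
  rw [ContinuousLinearMap.isUnit_iff_bijective,
    ContinuousLinearMap.bijective_iff_dense_range_and_antilipschitz]
  refine ⟨?_, ⟨c, hc.le⟩, T.antilipschitz_of_bound h⟩
  rw [Submodule.topologicalClosure_eq_top_iff, ContinuousLinearMap.orthogonal_range]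
  rw [hT.adjoint_eq, Submodule.eq_bot_iff]
  intro x hx
  have : T x = 0 := hx
  have h2 := h x
  rw [this] at h2
  simpa using h2

lemma disc_of [CompleteSpace E] (A L C : E →L[ℂ] E) (hA : IsSelfAdjoint A)
    (hC : IsCompactOperator C) (z : ℂ)
    (h : ∀ f, f = L (A f - z • f) + C f) (hz : z ∈ spectrum ℂ A) : z ∈ discSpec A := by
  have hzr : ∀ w ∈ spectrum ℂ A, (starRingEnd ℂ) w = w := by
    intro w hw
    rw [hA.mem_spectrum_eq_re hw]; simp
  have hsa : ∀ w ∈ spectrum ℂ A, IsSelfAdjoint (A - w • (1 : E →L[ℂ] E)) := by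
    intro w hw
    refine hA.sub ?_
    rw [IsSelfAdjoint, star_smul, star_one]
    congr 1
    exact hzr w hw
  have hnu : ∀ w ∈ spectrum ℂ A, ¬ IsUnit (A - w • (1 : E →L[ℂ] E)) := by
    intro w hw hu
    apply hw
    rw [spectrum.mem_resolventSet_iff, Algebra.algebraMap_eq_smul_one, ← neg_sub]
    exact hu.neg
  set T := A - z • (1 : E →L[ℂ] E) with hTdef
  have hTap : ∀ f, T f = A f - z • f := fun f => by simp [hTdef]
  set N : Submodule ℂ E := LinearMap.ker (T : E →ₗ[ℂ] E) with hN
  have hNmem : ∀ x, x ∈ N ↔ T x = 0 := fun x => Iff.rfl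
  -- finite dimension
  have hfin : FiniteDimensional ℂ N := by
    apply FiniteDimensional.of_isCompactOperator_id (𝕜 := ℂ)
    have h1 : IsCompactOperator (C ∘ N.subtypeL) := hC.comp_clm N.subtypeL
    have hclosed : IsClosed (N : Set E) := T.isClosed_ker
    have h2 := h1.codRestrict (V := N) (fun x => by
      have hx := h x
      rw [← hTap, (hNmem x).1 x.2] at hx
      simp only [map_zero, zero_add] at hx
      show C x ∈ N
      rw [← hx]; exact x.2) hclosed
    refine (congrArg IsCompactOperator ?_).mp h2
    funext x
    apply Subtype.ext
    have hx := h x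
    rw [← hTap, (hNmem x).1 x.2] at hx
    rw [map_zero, zero_add] at hx
    exact hx.symm
  have : N.HasOrthogonalProjection := inferInstance
  -- lower bound
  have hlow : ∃ c : ℝ, 0 < c ∧ ∀ x ∈ Nᗮ, c * ‖x‖ ≤ ‖T x‖ := by
    by_contra hcon
    push Not at hcon
    choose v hv hv2 using fun n : ℕ => hcon (1 / ((n : ℝ) + 1)) (by positivity)
    have hv0 : ∀ n, v n ≠ 0 := by
      intro n h0
      have := hv2 n
      simp [h0] at this
    set u : ℕ → E := fun n => ((‖v n‖⁻¹ : ℝ) : ℂ) • v n with hu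
    have hu1 : ∀ n, ‖u n‖ = 1 := by
      intro n
      have := norm_pos_iff.2 (hv0 n)
      simp [hu, norm_smul, this.ne']
    have hTu : ∀ n, ‖T (u n)‖ ≤ 1 / ((n:ℝ) + 1) := by
      intro n
      have hp := norm_pos_iff.2 (hv0 n)
      have := (hv2 n).le
      simp only [hu, map_smul, norm_smul, Complex.norm_real, norm_inv, norm_norm]
      rw [inv_mul_le_iff₀ hp, mul_comm]
      exact this
    have hlim : Tendsto (fun n => A (u n) - z • u n) atTop (𝓝 0) := by
      rw [tendsto_zero_iff_norm_tendsto_zero]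
      refine squeeze_zero (fun _ => norm_nonneg _) (fun n => ?_) tendsto_one_div_add_atTop_nhds_zero_nat
      rw [← hTap]; exact hTu n
    obtain ⟨a, φ, hφ, hl⟩ := seq_compact A L C hC z h u (fun n => (hu1 n).le) hlim
    have ha1 : ‖a‖ = 1 := by
      refine tendsto_nhds_unique hl.norm ?_
      simp [hu1]
    have haT : T a = 0 := by
      refine tendsto_nhds_unique ((T.continuous.tendsto a).comp hl) ?_
      refine (hlim.comp hφ.tendsto_atTop).congr (fun n => ?_)
      simp [hTap]
    have haO : a ∈ Nᗮ := by
      refine (Submodule.isClosed_orthogonal N).mem_of_tendsto hl (Eventually.of_forall fun n => ?_)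
      exact Submodule.smul_mem _ _ (hv _)
    have := Submodule.inner_right_of_mem_orthogonal ((hNmem a).2 haT) haO
    rw [inner_self_eq_zero] at this
    simp [this] at ha1
  obtain ⟨c, hc, hlow⟩ := hlow
  refine ⟨?_, ?_, hfin⟩
  · by_contra hne
    push Not at hne
    apply hnu z hz
    refine isUnit_of_lower _ (hsa z hz) c⁻¹ (by positivity) (fun x => ?_)
    rw [← div_eq_inv_mul, le_div_iff₀ hc, mul_comm]
    refine hlow x ?_
    have : N = ⊥ := by
      rw [Submodule.eq_bot_iff]
      intro y hy
      by_contra hy0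
      exact hne y hy0 (by rw [hNmem, hTap, sub_eq_zero] at hy; exact hy)
    rw [this]; simp
  · rw [Metric.mem_closure_iff]
    push Not
    refine ⟨c, hc, ?_⟩
    rintro w ⟨hw, hwz⟩
    by_contra hlt
    push Not at hlt
    rw [dist_eq_norm] at hlt
    have hzw : 0 < ‖z - w‖ := norm_pos_iff.2 (sub_ne_zero.2 (Ne.symm hwz))
    have hcz : 0 < c - ‖z - w‖ := by linarith
    apply hnu w hw
    refine isUnit_of_lower _ (hsa w hw) (‖z - w‖⁻¹ + (c - ‖z - w‖)⁻¹) (by positivity) (fun x => ?_)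
    set S := A - w • (1 : E →L[ℂ] E) with hS
    have hST : ∀ f, S f = T f + (z - w) • f := fun f => by
      simp [hS, hTap, sub_smul]
    obtain ⟨n, hn, m, hm, rfl⟩ := N.exists_add_mem_mem_orthogonal x
    have hSn : S n = (z - w) • n := by rw [hST, (hNmem n).1 hn, zero_add]
    have hSm : S m ∈ Nᗮ := by
      rw [Submodule.mem_orthogonal]
      intro y hy
      have h3 : inner ℂ y (S m) = inner ℂ (S y) m := by
        have := hsa w hw
        rw [ContinuousLinearMap.isSelfAdjoint_iff_isSymmetric] at this
        exact (this y m).symm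
      rw [h3, hST, (hNmem y).1 hy, zero_add]
      exact Submodule.inner_right_of_mem_orthogonal (N.smul_mem _ hy) hm
    have horth : inner ℂ (S n) (S m) = 0 := by
      rw [hSn]
      exact Submodule.inner_right_of_mem_orthogonal (N.smul_mem _ hn) hSm
    have hpy : ‖S (n + m)‖ * ‖S (n + m)‖ = ‖S n‖ * ‖S n‖ + ‖S m‖ * ‖S m‖ := by
      rw [map_add]
      exact norm_add_sq_eq_norm_sq_add_norm_sq_of_inner_eq_zero _ _ horth
    have e1 : ‖S n‖ ≤ ‖S (n + m)‖ := by
      by_contra hh; push Not at hh; nlinarith [norm_nonneg (S m), norm_nonneg (S n), norm_nonneg (S (n+m))]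
    have e2 : ‖S m‖ ≤ ‖S (n + m)‖ := by
      by_contra hh; push Not at hh; nlinarith [norm_nonneg (S m), norm_nonneg (S n), norm_nonneg (S (n+m))]
    have e3 : ‖n‖ ≤ ‖z - w‖⁻¹ * ‖S (n + m)‖ := by
      rw [← div_eq_inv_mul, le_div_iff₀ hzw, mul_comm, ← norm_smul, ← hSn]; exact e1
    have e4 : ‖m‖ ≤ (c - ‖z - w‖)⁻¹ * ‖S (n + m)‖ := by
      rw [← div_eq_inv_mul, le_div_iff₀ hcz]
      have h5 := hlow m hm
      have h6 : T m = S m - (z - w) • m := by rw [hST]; abel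
      have h7 : ‖T m‖ ≤ ‖S m‖ + ‖z - w‖ * ‖m‖ := by
        rw [h6, ← norm_smul]; exact norm_sub_le _ _
      nlinarith
    calc ‖n + m‖ ≤ ‖n‖ + ‖m‖ := norm_add_le _ _
      _ ≤ _ := by rw [add_mul]; exact add_le_add e3 e4

end AbstractPart

section OperatorPart

open scoped ENNReal

lemma exists_mul {X : Type*} [TopologicalSpace X] [CompactSpace X] [SecondCountableTopology X]
    [MeasurableSpace X] [BorelSpace X] (μ : Measure X) [IsFiniteMeasure μ]
    (φ : X → ℂ) (hφ : Continuous φ) :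
    ∃ M : Lp ℂ 2 μ →L[ℂ] Lp ℂ 2 μ, ∀ f : Lp ℂ 2 μ, ⇑(M f) =ᵐ[μ] fun x => φ x * f x := by
  refine ⟨(ContinuousLinearMap.mul ℂ ℂ).holderL μ ∞ 2 2 (ContinuousMap.toLp ∞ μ ℂ ⟨φ, hφ⟩), ?_⟩
  intro f
  have h1 := (ContinuousLinearMap.mul ℂ ℂ).coeFn_holder (r := 2)
    (ContinuousMap.toLp ∞ μ ℂ (⟨φ, hφ⟩ : C(X, ℂ))) f
  have h2 := ContinuousMap.coeFn_toLp (p := ∞) (𝕜 := ℂ) μ (⟨φ, hφ⟩ : C(X, ℂ))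
  filter_upwards [h1, h2] with x hx1 hx2
  refine hx1.trans ?_
  rw [hx2]
  rfl

lemma compact_eval {X F : Type*} [TopologicalSpace X] [CompactSpace X]
    [NormedAddCommGroup F] [NormedSpace ℂ F] (Φ : C(X, F →L[ℂ] ℂ)) :
    ∃ T : F →L[ℂ] BoundedContinuousFunction X ℂ, IsCompactOperator T ∧
      ∀ g p, T g p = Φ p g := by
  have hb : ∀ g p, ‖Φ p g‖ ≤ ‖Φ‖ * ‖g‖ := fun g p =>
    ((Φ p).le_opNorm g).trans (mul_le_mul_of_nonneg_right (Φ.norm_coe_le_norm p) (norm_nonneg g))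
  let T0 : F →ₗ[ℂ] BoundedContinuousFunction X ℂ :=
    { toFun := fun g => BoundedContinuousFunction.mkOfCompact ⟨fun p => Φ p g, by fun_prop⟩
      map_add' := fun a b => by ext p; simp
      map_smul' := fun a b => by ext p; simp }
  have hT0 : ∀ g p, T0 g p = Φ p g := fun g p => rfl
  let T : F →L[ℂ] BoundedContinuousFunction X ℂ := T0.mkContinuous ‖Φ‖ (fun g => by
    rw [BoundedContinuousFunction.norm_le (by positivity)]
    exact hb g)
  have hT : ∀ g p, T g p = Φ p g := fun g p => rfl
  refine ⟨T, ?_, hT⟩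
  refine (isCompactOperator_iff_isCompact_closure_image_closedBall (T : F →ₗ[ℂ] BoundedContinuousFunction X ℂ) one_pos).2 ?_
  refine BoundedContinuousFunction.arzela_ascoli (Metric.closedBall 0 ‖Φ‖)
    (isCompact_closedBall _ _) _ ?_ ?_
  · rintro f x ⟨g, hg, rfl⟩
    simp only [Metric.mem_closedBall, dist_zero_right] at hg ⊢
    exact (hb g x).trans (mul_le_of_le_one_right (norm_nonneg Φ) hg)
  · intro x₀
    rw [Metric.equicontinuousAt_iff_right]
    intro ε hε
    have hc : ∀ᶠ x in 𝓝 x₀, dist (Φ x) (Φ x₀) < ε := (Φ.continuous.tendsto x₀) (Metric.ball_mem_nhds _ hε)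
    filter_upwards [hc] with x hx
    rintro ⟨f, g, hg, rfl⟩
    simp only [Metric.mem_closedBall, dist_zero_right] at hg
    show dist (Φ x₀ g) (Φ x g) < ε
    rw [dist_eq_norm]
    have : Φ x₀ g - Φ x g = (Φ x₀ - Φ x) g := rfl
    rw [this]
    rw [dist_eq_norm, ← neg_sub, norm_neg] at hx
    exact (((Φ x₀ - Φ x).le_opNorm g).trans (mul_le_of_le_one_right (norm_nonneg _) hg)).trans_lt hx

lemma exists_kernel {X : Type*} [TopologicalSpace X] [CompactSpace X] [SecondCountableTopology X]
    [MeasurableSpace X] [BorelSpace X] (μ : Measure X) [IsFiniteMeasure μ]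
    (k : X → X → ℂ) (hk : Continuous fun x : X × X => k x.1 x.2) :
    ∃ G : Lp ℂ 2 μ →L[ℂ] Lp ℂ 2 μ, IsCompactOperator G ∧
      ∀ g : Lp ℂ 2 μ, ⇑(G g) =ᵐ[μ] fun p => ∫ t, k p t * g t ∂μ := by
  let κ : C(X, C(X, ℂ)) := ContinuousMap.curry ⟨fun x : X × X => k x.1 x.2, hk⟩
  have hκ : ∀ p t, κ p t = k p t := fun p t => rfl
  let P := (ContinuousLinearMap.mul ℂ ℂ).lpPairing μ 2 2
  let Φ : C(X, Lp ℂ 2 μ →L[ℂ] ℂ) :=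
    ⟨fun p => P (ContinuousMap.toLp 2 μ ℂ (κ p)), by fun_prop⟩
  have hΦ : ∀ p g, Φ p g = ∫ t, k p t * g t ∂μ := by
    intro p g
    refine ((ContinuousLinearMap.mul ℂ ℂ).lpPairing_eq_integral _ g).trans ?_
    apply integral_congr_ae
    have h2 := ContinuousMap.coeFn_toLp (p := 2) (𝕜 := ℂ) μ (κ p)
    filter_upwards [h2] with x hx2
    rw [hx2]
    rfl
  obtain ⟨T, hT, hT2⟩ := compact_eval Φ
  refine ⟨(BoundedContinuousFunction.toLp 2 μ ℂ).comp T, hT.clm_comp (BoundedContinuousFunction.toLp 2 μ ℂ), fun g => ?_⟩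
  have h2 := BoundedContinuousFunction.coeFn_toLp 2 μ ℂ (T g)
  filter_upwards [h2] with x hx
  refine hx.trans ?_
  rw [hT2, hΦ]

end OperatorPart

section Components

def P0 (d : ℕ) : H3 d →L[ℂ] ℂ :=
  (ContinuousLinearMap.fst ℂ ℂ (WithLp 2 (L2 d × L2sym d))).comp
    (WithLp.prodContinuousLinearEquiv 2 ℂ ℂ (WithLp 2 (L2 d × L2sym d))).toContinuousLinearMap

def P12 (d : ℕ) : H3 d →L[ℂ] (L2 d × L2sym d) :=
  (WithLp.prodContinuousLinearEquiv 2 ℂ (L2 d) (L2sym d)).toContinuousLinearMap.comp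
  ((ContinuousLinearMap.snd ℂ ℂ (WithLp 2 (L2 d × L2sym d))).comp
    (WithLp.prodContinuousLinearEquiv 2 ℂ ℂ (WithLp 2 (L2 d × L2sym d))).toContinuousLinearMap)

def P1 (d : ℕ) : H3 d →L[ℂ] L2 d := (ContinuousLinearMap.fst ℂ (L2 d) (L2sym d)).comp (P12 d)

def S2 (d : ℕ) : H3 d →L[ℂ] L2sym d := (ContinuousLinearMap.snd ℂ (L2 d) (L2sym d)).comp (P12 d)

def mkH (d : ℕ) : (ℂ × (L2 d × L2sym d)) →L[ℂ] H3 d :=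
  (WithLp.prodContinuousLinearEquiv 2 ℂ ℂ (WithLp 2 (L2 d × L2sym d))).symm.toContinuousLinearMap.comp
    ((ContinuousLinearMap.id ℂ ℂ).prodMap
      (WithLp.prodContinuousLinearEquiv 2 ℂ (L2 d) (L2sym d)).symm.toContinuousLinearMap)

def I0 (d : ℕ) : ℂ →L[ℂ] H3 d := (mkH d).comp (ContinuousLinearMap.inl ℂ ℂ (L2 d × L2sym d))

def I1 (d : ℕ) : L2 d →L[ℂ] H3 d := ((mkH d).comp (ContinuousLinearMap.inr ℂ ℂ (L2 d × L2sym d))).comp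
  (ContinuousLinearMap.inl ℂ (L2 d) (L2sym d))

def I2 (d : ℕ) : L2sym d →L[ℂ] H3 d := ((mkH d).comp (ContinuousLinearMap.inr ℂ ℂ (L2 d × L2sym d))).comp
  (ContinuousLinearMap.inr ℂ (L2 d) (L2sym d))

lemma p0_eq (f : H3 d) : p0 f = P0 d f := rfl
lemma p1_eq (f : H3 d) : p1 f = P1 d f := rfl
lemma p2_eq (f : H3 d) : p2 f = (S2 d f : L2two d) := rfl

@[simp] lemma P0_I0 (a : ℂ) : P0 d (I0 d a) = a := rfl
@[simp] lemma P1_I0 (a : ℂ) : P1 d (I0 d a) = 0 := rfl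
@[simp] lemma S2_I0 (a : ℂ) : S2 d (I0 d a) = 0 := rfl
@[simp] lemma P0_I1 (a : L2 d) : P0 d (I1 d a) = 0 := rfl
@[simp] lemma P1_I1 (a : L2 d) : P1 d (I1 d a) = a := rfl
@[simp] lemma S2_I1 (a : L2 d) : S2 d (I1 d a) = 0 := rfl
@[simp] lemma P0_I2 (a : L2sym d) : P0 d (I2 d a) = 0 := rfl
@[simp] lemma P1_I2 (a : L2sym d) : P1 d (I2 d a) = 0 := rfl
@[simp] lemma S2_I2 (a : L2sym d) : S2 d (I2 d a) = a := rfl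

lemma decomp (f : H3 d) : f = I0 d (P0 d f) + I1 d (P1 d f) + I2 d (S2 d f) := by
  have h : f = mkH d (P0 d f, (P1 d f, S2 d f)) := rfl
  have h2 : ((P0 d f, (P1 d f, S2 d f)) : ℂ × (L2 d × L2sym d)) =
     (P0 d f, (0, 0)) + (0, (P1 d f, 0)) + (0, (0, S2 d f)) := by simp
  rw [h2, map_add, map_add] at h
  exact h

lemma inner_H3 (f g : H3 d) : inner ℂ f g = inner ℂ (P0 d f) (P0 d g) +
    (inner ℂ (P1 d f) (P1 d g) + inner ℂ (S2 d f : L2two d) (S2 d g : L2two d)) := by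
  rw [WithLp.prod_inner_apply, WithLp.prod_inner_apply]
  rfl

lemma sym_ae (h : L2sym d) : (fun x : Td d × Td d => (h : L2two d) x.swap) =ᵐ[volume] (h : L2two d) := by
  have h1 : swapL d h = h := by
    have : (h : L2two d) ∈ LinearMap.ker (swapL d - LinearMap.id) := h.2
    rw [LinearMap.mem_ker, LinearMap.sub_apply, sub_eq_zero] at this
    exact this
  have h2 := Lp.coeFn_compMeasurePreserving (h : L2two d)
    (MeasureTheory.Measure.measurePreserving_swap (μ := (volume : Measure (Td d))) (ν := (volume : Measure (Td d))))
  have h3 : Lp.compMeasurePreserving Prod.swap MeasureTheory.Measure.measurePreserving_swap (h : L2two d) = (h : L2two d) := h1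
  rw [h3] at h2
  exact h2.symm

lemma mem_sym (h : L2two d) (hh : (fun x : Td d × Td d => h x.swap) =ᵐ[volume] h) : h ∈ symSub d := by
  rw [symSub, LinearMap.mem_ker, LinearMap.sub_apply, sub_eq_zero]
  have h2 := Lp.coeFn_compMeasurePreserving h
    (MeasureTheory.Measure.measurePreserving_swap (μ := (volume : Measure (Td d))) (ν := (volume : Measure (Td d))))
  apply Lp.ext
  exact h2.trans hh

end Components

section Blocks

set_option linter.unusedSimpArgs false

lemma ae_fst {P : Td d → Prop} (h : ∀ᵐ p ∂(volume : Measure (Td d)), P p) :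
    ∀ᵐ x ∂(volume : Measure (Td d × Td d)), P x.1 :=
  Measure.quasiMeasurePreserving_fst.ae h

lemma ae_snd {P : Td d → Prop} (h : ∀ᵐ p ∂(volume : Measure (Td d)), P p) :
    ∀ᵐ x ∂(volume : Measure (Td d × Td d)), P x.2 :=
  Measure.quasiMeasurePreserving_snd.ae h

lemma ae_curry {P : Td d × Td d → Prop} (h : ∀ᵐ p ∂(volume : Measure (Td d × Td d)), P p) :
    ∀ᵐ x ∂(volume : Measure (Td d)), ∀ᵐ y ∂(volume : Measure (Td d)), P (x, y) :=
  Measure.ae_ae_of_ae_prod h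

variable {w₀ v₀ v₁ : Td d → ℝ} {w₁ : Td d → Td d → ℝ} {w₂ : Td d → Td d → Td d → ℝ}
  {K : Td d} {H : H3 d →L[ℂ] H3 d}

lemma b00 (hH : IsHamiltonian w₀ v₀ v₁ w₁ w₂ K H) (a : ℂ) :
    P0 d (H (I0 d a)) = w₀ K * a := by
  have h := (hH (I0 d a)).1
  simp only [p0_eq, p1_eq, P0_I0, P1_I0] at h
  rw [h, add_eq_left]
  refine (integral_congr_ae ?_).trans (integral_zero _ _)
  filter_upwards [Lp.coeFn_zero ℂ 2 (volume : Measure (Td d))] with t ht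
  simp [ht]

lemma b01 (hH : IsHamiltonian w₀ v₀ v₁ w₁ w₂ K H) (g : L2 d) :
    P0 d (H (I1 d g)) = ∫ t, (v₀ t : ℂ) * g t := by
  have h := (hH (I1 d g)).1
  simp only [p0_eq, p1_eq, P0_I1, P1_I1, mul_zero, zero_add] at h
  exact h

lemma b02 (hH : IsHamiltonian w₀ v₀ v₁ w₁ w₂ K H) (g : L2sym d) :
    P0 d (H (I2 d g)) = 0 := by
  have h := (hH (I2 d g)).1
  simp only [p0_eq, p1_eq, P0_I2, P1_I2, mul_zero, zero_add] at h
  rw [h]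
  refine (integral_congr_ae ?_).trans (integral_zero _ _)
  filter_upwards [Lp.coeFn_zero ℂ 2 (volume : Measure (Td d))] with t ht
  simp [ht]

lemma int_zero : ∀ᵐ p ∂(volume : Measure (Td d)),
    ∫ t, (v₁ t : ℂ) * (((0 : L2sym d) : L2two d) (p, t)) = 0 := by
  have h0 : ∀ᵐ x ∂(volume : Measure (Td d × Td d)), ((0 : L2sym d) : L2two d) x = 0 :=
    Lp.coeFn_zero ℂ 2 (volume : Measure (Td d × Td d))
  filter_upwards [ae_curry h0] with p hp
  refine (integral_congr_ae ?_).trans (integral_zero _ _)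
  filter_upwards [hp] with t ht
  rw [ht, mul_zero]

lemma b10 (hH : IsHamiltonian w₀ v₀ v₁ w₁ w₂ K H) (a : ℂ) :
    ⇑(P1 d (H (I0 d a))) =ᵐ[volume] fun p => (v₀ p : ℂ) * a := by
  have h := (hH (I0 d a)).2.1
  simp only [p0_eq, p1_eq, p2_eq, P0_I0, P1_I0, S2_I0] at h
  filter_upwards [h, int_zero (d := d) (v₁ := v₁), Lp.coeFn_zero ℂ 2 (volume : Measure (Td d))] with p hp hp2 hp3
  rw [hp, hp2, hp3]
  simp

lemma b11 (hH : IsHamiltonian w₀ v₀ v₁ w₁ w₂ K H) (g : L2 d) :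
    ⇑(P1 d (H (I1 d g))) =ᵐ[volume] fun p => (w₁ K p : ℂ) * g p := by
  have h := (hH (I1 d g)).2.1
  simp only [p0_eq, p1_eq, p2_eq, P0_I1, P1_I1, S2_I1] at h
  filter_upwards [h, int_zero (d := d) (v₁ := v₁)] with p hp hp2
  rw [hp, hp2]
  simp

lemma b12 (hH : IsHamiltonian w₀ v₀ v₁ w₁ w₂ K H) (f : L2sym d) :
    ⇑(P1 d (H (I2 d f))) =ᵐ[volume] fun p => ∫ t, (v₁ t : ℂ) * (f : L2two d) (p, t) := by
  have h := (hH (I2 d f)).2.1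
  simp only [p0_eq, p1_eq, p2_eq, P0_I2, P1_I2, S2_I2] at h
  filter_upwards [h, Lp.coeFn_zero ℂ 2 (volume : Measure (Td d))] with p hp hp3
  rw [hp, hp3]
  simp

lemma b20 (hH : IsHamiltonian w₀ v₀ v₁ w₁ w₂ K H) (a : ℂ) :
    S2 d (H (I0 d a)) = 0 := by
  have h := (hH (I0 d a)).2.2
  simp only [p0_eq, p1_eq, p2_eq, P0_I0, P1_I0, S2_I0] at h
  apply Subtype.ext
  apply Lp.ext
  have h0 : ∀ᵐ x ∂(volume : Measure (Td d × Td d)), ((0 : L2sym d) : L2two d) x = 0 :=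
    Lp.coeFn_zero ℂ 2 (volume : Measure (Td d × Td d))
  have h3 := Lp.coeFn_zero ℂ 2 (volume : Measure (Td d))
  filter_upwards [h, h0, ae_fst h3, ae_snd h3] with x hx hx0 h1 h2
  rw [hx, hx0, h1, h2]
  simp

lemma b21 (hH : IsHamiltonian w₀ v₀ v₁ w₁ w₂ K H) (g : L2 d) :
    ⇑(S2 d (H (I1 d g)) : L2two d) =ᵐ[volume] fun x : Td d × Td d =>
        ((v₁ x.1 : ℂ) * g x.2 + (v₁ x.2 : ℂ) * g x.1) / 2 := by
  have h := (hH (I1 d g)).2.2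
  simp only [p0_eq, p1_eq, p2_eq, P0_I1, P1_I1, S2_I1] at h
  have h0 : ∀ᵐ x ∂(volume : Measure (Td d × Td d)), ((0 : L2sym d) : L2two d) x = 0 :=
    Lp.coeFn_zero ℂ 2 (volume : Measure (Td d × Td d))
  filter_upwards [h, h0] with x hx hx0
  rw [hx, hx0]
  simp

lemma b22 (hH : IsHamiltonian w₀ v₀ v₁ w₁ w₂ K H) (f : L2sym d) :
    ⇑(S2 d (H (I2 d f)) : L2two d) =ᵐ[volume] fun x : Td d × Td d =>
        (w₂ K x.1 x.2 : ℂ) * (f : L2two d) x := by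
  have h := (hH (I2 d f)).2.2
  simp only [p0_eq, p1_eq, p2_eq, P0_I2, P1_I2, S2_I2] at h
  have h3 := Lp.coeFn_zero ℂ 2 (volume : Measure (Td d))
  filter_upwards [h, ae_fst h3, ae_snd h3] with x hx h1 h2
  rw [hx, h1, h2]
  simp

lemma s01 (hH : IsHamiltonian w₀ v₀ v₁ w₁ w₂ K H) (g : L2 d) (a : ℂ) :
    inner ℂ (P0 d (H (I1 d g))) a = inner ℂ g (P1 d (H (I0 d a))) := by
  rw [b01 hH, L2.inner_def, RCLike.inner_apply, ← integral_conj, ← integral_const_mul]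
  apply integral_congr_ae
  filter_upwards [b10 hH a] with p hp
  rw [hp, RCLike.inner_apply]
  simp
  ring

lemma s11 (hH : IsHamiltonian w₀ v₀ v₁ w₁ w₂ K H) (g g' : L2 d) :
    inner ℂ (P1 d (H (I1 d g))) g' = inner ℂ g (P1 d (H (I1 d g'))) := by
  rw [L2.inner_def, L2.inner_def]
  apply integral_congr_ae
  filter_upwards [b11 hH g, b11 hH g'] with p hp hp'
  rw [hp, hp', RCLike.inner_apply, RCLike.inner_apply]
  simp
  ring

lemma s22 (hH : IsHamiltonian w₀ v₀ v₁ w₁ w₂ K H) (g g' : L2sym d) :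
    inner ℂ (S2 d (H (I2 d g)) : L2two d) (g' : L2two d)
      = inner ℂ (g : L2two d) (S2 d (H (I2 d g')) : L2two d) := by
  rw [L2.inner_def, L2.inner_def]
  apply integral_congr_ae
  filter_upwards [b22 hH g, b22 hH g'] with p hp hp'
  rw [hp, hp', RCLike.inner_apply, RCLike.inner_apply]
  simp
  ring

lemma s12 (hv₁ : Continuous v₁) (hH : IsHamiltonian w₀ v₀ v₁ w₁ w₂ K H) (g : L2 d) (f : L2sym d) :
    inner ℂ (P1 d (H (I2 d f))) g = inner ℂ (f : L2two d) (S2 d (H (I1 d g)) : L2two d) := by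
  set F : Td d × Td d → ℂ := fun x => (v₁ x.2 : ℂ) * (g x.1 * (starRingEnd ℂ) ((f : L2two d) x)) with hF
  have hFi : Integrable F (volume.prod volume) := by
    obtain ⟨c, hc⟩ := (isCompact_range hv₁).isBounded.exists_norm_le
    refine Integrable.bdd_mul (c := c) ?_ ?_ ?_
    · have m1 : MemLp (fun x : Td d × Td d => g x.1) 2 (volume.prod volume) :=
        (Lp.memLp g).comp_fst _
      have m2 : MemLp (fun x : Td d × Td d => (starRingEnd ℂ) ((f : L2two d) x)) 2 (volume.prod volume) :=
        (Lp.memLp (f : L2two d)).star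
      exact m1.integrable_mul m2
    · apply Continuous.aestronglyMeasurable
      fun_prop
    · refine Eventually.of_forall fun x => ?_
      rw [Complex.norm_real]
      exact hc _ ⟨_, rfl⟩
  have e1 : inner ℂ (P1 d (H (I2 d f))) g = ∫ x, F x ∂(volume.prod volume) := by
    rw [integral_prod _ hFi, L2.inner_def]
    apply integral_congr_ae
    filter_upwards [b12 hH f] with p hp
    rw [hp, RCLike.inner_apply, ← integral_conj, ← integral_const_mul]
    congr 1
    ext t
    simp [hF]
    ring
  have e2 : inner ℂ (f : L2two d) (S2 d (H (I1 d g)) : L2two d)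
      = ∫ x, (F x.swap / 2 + F x / 2) ∂(volume.prod volume) := by
    rw [L2.inner_def]
    apply integral_congr_ae
    filter_upwards [b21 hH g, sym_ae f] with x hx hs
    rw [hx, RCLike.inner_apply]
    simp only [hF, hs, Prod.fst_swap, Prod.snd_swap]
    ring
  have hsw : Integrable (fun x : Td d × Td d => F x.swap) (volume.prod volume) := hFi.swap
  rw [e1, e2, integral_add (hsw.div_const 2) (hFi.div_const 2), integral_div, integral_div,
    integral_prod_swap]
  ring

lemma s10 (hH : IsHamiltonian w₀ v₀ v₁ w₁ w₂ K H) (g : L2 d) (a : ℂ) :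
    inner ℂ a (P0 d (H (I1 d g))) = inner ℂ (P1 d (H (I0 d a))) g := by
  have h := congrArg (starRingEnd ℂ) (s01 hH g a)
  exact ((inner_conj_symm (𝕜 := ℂ) _ _).symm.trans h).trans (inner_conj_symm (𝕜 := ℂ) _ _)

lemma s21 (hv₁ : Continuous v₁) (hH : IsHamiltonian w₀ v₀ v₁ w₁ w₂ K H) (g : L2 d) (f : L2sym d) :
    inner ℂ g (P1 d (H (I2 d f))) = inner ℂ (S2 d (H (I1 d g)) : L2two d) (f : L2two d) := by
  have h := congrArg (starRingEnd ℂ) (s12 hv₁ hH g f)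
  exact ((inner_conj_symm (𝕜 := ℂ) _ _).symm.trans h).trans (inner_conj_symm (𝕜 := ℂ) _ _)

set_option maxHeartbeats 2000000 in
lemma sa_H (hv₁ : Continuous v₁) (hH : IsHamiltonian w₀ v₀ v₁ w₁ w₂ K H) : IsSelfAdjoint H := by
  rw [ContinuousLinearMap.isSelfAdjoint_iff_isSymmetric]
  intro f g
  show inner ℂ (H f) g = inner ℂ f (H g)
  have hd : ∀ f : H3 d, H f = H (I0 d (P0 d f)) + H (I1 d (P1 d f)) + H (I2 d (S2 d f)) := by
    intro f
    conv_lhs => rw [decomp f]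
    rw [map_add, map_add]
  rw [inner_H3, inner_H3, hd f, hd g]
  simp only [map_add, Submodule.coe_add, inner_add_left, inner_add_right, b02 hH, b20 hH, inner_zero_left,
    inner_zero_right, Submodule.coe_zero, s01 hH, s11 hH, s22 hH, s12 hv₁ hH]
  rw [s10 hH, s21 hv₁ hH, b00 hH, b00 hH]
  simp only [RCLike.inner_apply, map_mul, Complex.conj_ofReal]
  ring

end Blocks

section Parametrix

variable {w₀ v₀ v₁ : Td d → ℝ} {w₁ : Td d → Td d → ℝ} {w₂ : Td d → Td d → Td d → ℝ}
  {K : Td d} {H : H3 d →L[ℂ] H3 d} {z : ℂ}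

lemma cont_w2 (hw₂ : Continuous fun x : Td d × Td d × Td d => w₂ x.1 x.2.1 x.2.2) :
    Continuous fun x : Td d × Td d => w₂ K x.1 x.2 :=
  hw₂.comp (by fun_prop : Continuous fun x : Td d × Td d => (K, x.1, x.2))

lemma mK_le (hw₂ : Continuous fun x : Td d × Td d × Td d => w₂ x.1 x.2.1 x.2.2) (p q : Td d) :
    mK w₂ K ≤ w₂ K p q :=
  ciInf_le (isCompact_range (cont_w2 (K := K) hw₂)).bddBelow (p, q)

lemma le_MK (hw₂ : Continuous fun x : Td d × Td d × Td d => w₂ x.1 x.2.1 x.2.2) (p q : Td d) :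
    w₂ K p q ≤ MK w₂ K :=
  le_ciSup (isCompact_range (cont_w2 (K := K) hw₂)).bddAbove (p, q)

lemma w2_ne (hw₂ : Continuous fun x : Td d × Td d × Td d => w₂ x.1 x.2.1 x.2.2)
    (hz : z ∉ SigK v₁ w₁ w₂ K) (p q : Td d) : (w₂ K p q : ℂ) - z ≠ 0 := by
  intro h
  apply hz
  left
  exact ⟨w₂ K p q, ⟨mK_le hw₂ p q, le_MK hw₂ p q⟩, sub_eq_zero.1 h⟩

lemma Delta_ne (hw₂ : Continuous fun x : Td d × Td d × Td d => w₂ x.1 x.2.1 x.2.2)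
    (hz : z ∉ SigK v₁ w₁ w₂ K) (k : Td d) : Delta v₁ w₁ w₂ K k z ≠ 0 := by
  intro h
  apply hz
  by_cases hb : z ∈ bandKk w₂ K k
  · left
    obtain ⟨x, ⟨h1, h2⟩, rfl⟩ := hb
    exact ⟨x, ⟨(le_ciInf fun q => mK_le hw₂ k q).trans h1,
      h2.trans (ciSup_le fun q => le_MK hw₂ k q)⟩, rfl⟩
  · right
    exact ⟨k, hb, h⟩

lemma cont_res (hw₂ : Continuous fun x : Td d × Td d × Td d => w₂ x.1 x.2.1 x.2.2)
    (hz : z ∉ SigK v₁ w₁ w₂ K) :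
    Continuous fun x : Td d × Td d => ((w₂ K x.1 x.2 : ℂ) - z)⁻¹ := by
  have := cont_w2 (K := K) hw₂
  exact Continuous.inv₀ (by fun_prop) (fun x => w2_ne hw₂ hz x.1 x.2)

lemma cont_Delta (hv₁ : Continuous v₁) (hw₁ : Continuous fun x : Td d × Td d => w₁ x.1 x.2)
    (hw₂ : Continuous fun x : Td d × Td d × Td d => w₂ x.1 x.2.1 x.2.2)
    (hz : z ∉ SigK v₁ w₁ w₂ K) : Continuous fun k => Delta v₁ w₁ w₂ K k z := by
  have h1 : Continuous fun k => w₁ K k := hw₁.comp (by fun_prop : Continuous fun k : Td d => (K, k))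
  have h2 := cont_res hw₂ hz
  have h3 : Continuous fun k => ∫ t in (Set.univ : Set (Td d)), (v₁ t : ℂ) ^ 2 / ((w₂ K k t : ℂ) - z) := by
    apply continuous_parametric_integral_of_continuous _ isCompact_univ
    simp only [div_eq_mul_inv]
    exact Continuous.mul (by fun_prop) h2
  simp only [Measure.restrict_univ] at h3
  unfold Delta
  fun_prop

lemma exists_R (hw₂ : Continuous fun x : Td d × Td d × Td d => w₂ x.1 x.2.1 x.2.2)
    (hsym : ∀ K p q : Td d, w₂ K p q = w₂ K q p)
    (hz : z ∉ SigK v₁ w₁ w₂ K) :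
    ∃ R : L2sym d →L[ℂ] L2sym d, ∀ f : L2sym d, ⇑(R f : L2two d) =ᵐ[volume]
      fun x => ((w₂ K x.1 x.2 : ℂ) - z)⁻¹ * (f : L2two d) x := by
  obtain ⟨M, hM⟩ := exists_mul (volume : Measure (Td d × Td d)) _ (cont_res hw₂ hz)
  refine ⟨(M.comp (symSub d).subtypeL).codRestrict (symSub d) ?_, fun f => hM f⟩
  intro f
  apply mem_sym
  have h1 : ⇑(M (f : L2two d)) =ᵐ[volume] _ := hM (f : L2two d)
  have h2 : ∀ᵐ x ∂(volume : Measure (Td d × Td d)), (M (f : L2two d)) x.swap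
      = ((w₂ K x.swap.1 x.swap.2 : ℂ) - z)⁻¹ * (f : L2two d) x.swap :=
    (MeasureTheory.Measure.measurePreserving_swap (μ := (volume : Measure (Td d)))
      (ν := (volume : Measure (Td d)))).quasiMeasurePreserving.ae h1
  filter_upwards [h1, h2, sym_ae f] with x e1 e2 e3
  show (M (f : L2two d)) x.swap = (M (f : L2two d)) x
  rw [e1, e2, e3, Prod.fst_swap, Prod.snd_swap, hsym]

lemma key_id (hv₁ : Continuous v₁)
    (hw₂ : Continuous fun x : Td d × Td d × Td d => w₂ x.1 x.2.1 x.2.2)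
    (hz : z ∉ SigK v₁ w₁ w₂ K) (hH : IsHamiltonian w₀ v₀ v₁ w₁ w₂ K H)
    (R : L2sym d →L[ℂ] L2sym d) (hR : ∀ f : L2sym d, ⇑(R f : L2two d) =ᵐ[volume]
      fun x => ((w₂ K x.1 x.2 : ℂ) - z)⁻¹ * (f : L2two d) x)
    (G M : L2 d →L[ℂ] L2 d)
    (hG : ∀ g : L2 d, ⇑(G g) =ᵐ[volume] fun p =>
      ∫ t, ((v₁ p : ℂ) * v₁ t / 2 * ((w₂ K p t : ℂ) - z)⁻¹) * g t)
    (hM : ∀ g : L2 d, ⇑(M g) =ᵐ[volume] fun p => (Delta v₁ w₁ w₂ K p z)⁻¹ * g p)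
    (g : L2 d) :
    M (P1 d (H (I1 d g)) - z • g - P1 d (H (I2 d (R (S2 d (H (I1 d g)))))) + G g) = g := by
  apply Lp.ext
  set a := P1 d (H (I1 d g)) with ha
  set b := P1 d (H (I2 d (R (S2 d (H (I1 d g)))))) with hb
  have hRB : ∀ᵐ p ∂(volume : Measure (Td d)), ∀ᵐ t ∂(volume : Measure (Td d)),
      (R (S2 d (H (I1 d g))) : L2two d) (p, t) =
        ((w₂ K p t : ℂ) - z)⁻¹ * (((v₁ p : ℂ) * g t + (v₁ t : ℂ) * g p) / 2) := by
    apply ae_curry (P := fun x => (R (S2 d (H (I1 d g))) : L2two d) x =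
        ((w₂ K x.1 x.2 : ℂ) - z)⁻¹ * (((v₁ x.1 : ℂ) * g x.2 + (v₁ x.2 : ℂ) * g x.1) / 2))
    filter_upwards [hR (S2 d (H (I1 d g))), b21 hH g] with x h1 h2
    rw [h1, h2]
  have hgi : Integrable (⇑g) volume := (Lp.memLp g).integrable (by norm_num)
  filter_upwards [hM (a - z • g - b + G g), Lp.coeFn_add (a - z • g - b) (G g),
    Lp.coeFn_sub (a - z • g) b, Lp.coeFn_sub a (z • g), Lp.coeFn_smul z g, hG g, b11 hH g,
    b12 hH (R (S2 d (H (I1 d g)))), hRB] with p e1 e2 e3 e4 e5 e6 e7 e8 e9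
  rw [e1, e2, Pi.add_apply, e3, Pi.sub_apply, e4, Pi.sub_apply, e5, e6, ha, hb, e7, e8]
  have hres : Continuous fun t => ((w₂ K p t : ℂ) - z)⁻¹ :=
    (cont_res hw₂ hz).comp (by fun_prop : Continuous fun t : Td d => (p, t))
  have i1 : Integrable (fun t => ((v₁ p : ℂ) * v₁ t / 2 * ((w₂ K p t : ℂ) - z)⁻¹) * g t) volume := by
    have hc : Continuous (fun t => ((v₁ p : ℂ) * v₁ t / 2 * ((w₂ K p t : ℂ) - z)⁻¹)) := by fun_prop
    obtain ⟨c, hc'⟩ := (isCompact_range hc).isBounded.exists_norm_le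
    exact hgi.bdd_mul (c := c) hc.aestronglyMeasurable (Eventually.of_forall fun t => hc' _ ⟨t, rfl⟩)
  have i2 : Integrable (fun t => (v₁ t : ℂ) ^ 2 / ((w₂ K p t : ℂ) - z)) volume := by
    have hc : Continuous (fun t => (v₁ t : ℂ) ^ 2 / ((w₂ K p t : ℂ) - z)) := by
      simp only [div_eq_mul_inv]; fun_prop
    exact hc.integrable_of_hasCompactSupport (HasCompactSupport.of_compactSpace _)
  have e10 : ∫ t, (v₁ t : ℂ) * (R (S2 d (H (I1 d g))) : L2two d) (p, t) =
      (∫ t, ((v₁ p : ℂ) * v₁ t / 2 * ((w₂ K p t : ℂ) - z)⁻¹) * g t) +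
      (∫ t, (v₁ t : ℂ) ^ 2 / ((w₂ K p t : ℂ) - z)) * (g p / 2) := by
    rw [← integral_mul_const, ← integral_add i1 (i2.mul_const _)]
    apply integral_congr_ae
    filter_upwards [e9] with t ht
    rw [ht]
    ring
  rw [e10]
  have hD := Delta_ne hw₂ hz p
  rw [inv_mul_eq_iff_eq_mul₀ hD]
  simp only [Pi.smul_apply, smul_eq_mul, Delta]
  ring

set_option maxHeartbeats 4000000 in
lemma parametrix (hv₁ : Continuous v₁) (hw₁ : Continuous fun x : Td d × Td d => w₁ x.1 x.2)
    (hw₂ : Continuous fun x : Td d × Td d × Td d => w₂ x.1 x.2.1 x.2.2)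
    (hsym : ∀ K p q : Td d, w₂ K p q = w₂ K q p)
    (hz : z ∉ SigK v₁ w₁ w₂ K) (hH : IsHamiltonian w₀ v₀ v₁ w₁ w₂ K H) :
    ∃ L C : H3 d →L[ℂ] H3 d, IsCompactOperator C ∧ ∀ f, f = L (H f - z • f) + C f := by
  obtain ⟨R, hR⟩ := exists_R hw₂ hsym hz
  have hres := cont_res hw₂ hz
  obtain ⟨G, hGc, hG⟩ := exists_kernel (volume : Measure (Td d))
    (fun p t => ((v₁ p : ℂ) * v₁ t / 2 * ((w₂ K p t : ℂ) - z)⁻¹)) (by fun_prop)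
  obtain ⟨M, hM⟩ := exists_mul (volume : Measure (Td d)) (fun p => (Delta v₁ w₁ w₂ K p z)⁻¹)
    ((cont_Delta hv₁ hw₁ hw₂ hz).inv₀ (Delta_ne hw₂ hz))
  have hkey := key_id hv₁ hw₂ hz hH R hR G M hG hM
  have hR2 : ∀ h : L2sym d, R (S2 d (H (I2 d h)) - z • h) = h := by
    intro h
    apply Subtype.ext
    apply Lp.ext
    have e0 := Lp.coeFn_sub (S2 d (H (I2 d h)) : L2two d) (z • h : L2two d)
    filter_upwards [hR (S2 d (H (I2 d h)) - z • h), e0, Lp.coeFn_smul z (h : L2two d), b22 hH h]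
      with x e1 e2 e3 e4
    rw [e1]
    rw [Submodule.coe_sub, Submodule.coe_smul, e2, Pi.sub_apply, e3, e4,
      inv_mul_eq_iff_eq_mul₀ (w2_ne hw₂ hz x.1 x.2)]
    simp only [Pi.smul_apply, smul_eq_mul]
    ring
  let B : L2 d →L[ℂ] L2sym d := (S2 d).comp (H.comp (I1 d))
  let J : L2sym d →L[ℂ] L2 d := (P1 d).comp (H.comp (I2 d))
  let Q : L2 d →L[ℂ] H3 d := I1 d - (I2 d).comp (R.comp B)
  have hB : ∀ g, B g = S2 d (H (I1 d g)) := fun _ => rfl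
  have hJ : ∀ g, J g = P1 d (H (I2 d g)) := fun _ => rfl
  have hQ : ∀ g, Q g = I1 d g - I2 d (R (B g)) := fun _ => rfl
  let Z : ℂ →L[ℂ] L2 d := (P1 d).comp (H.comp (I0 d))
  have hZ : ∀ g, Z g = P1 d (H (I0 d g)) := fun _ => rfl
  simp only [← hB, ← hJ] at hkey
  let QM := Q.comp M
  have hP0 : IsCompactOperator (P0 d) := isCompactOperator_of_locallyCompactSpace_dom (P0 d)
  refine ⟨QM.comp (P1 d - J.comp (R.comp (S2 d))) + (I2 d).comp (R.comp (S2 d)),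
    (I0 d).comp (P0 d) + (QM.comp (G.comp (P1 d)) - QM.comp (Z.comp (P0 d))), ?_, ?_⟩
  · refine IsCompactOperator.add (hP0.clm_comp (I0 d)) (IsCompactOperator.sub ?_ ?_)
    · exact (hGc.comp_clm (P1 d)).clm_comp QM
    · exact hP0.clm_comp (QM.comp Z)
  · intro f
    have hHf : H f = H (I0 d (P0 d f)) + H (I1 d (P1 d f)) + H (I2 d (S2 d f)) := by
      conv_lhs => rw [decomp f]
      rw [map_add, map_add]
    set r := H f - z • f with hr
    have r1 : P1 d r = Z (P0 d f) + P1 d (H (I1 d (P1 d f))) + J (S2 d f) - z • P1 d f := by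
      rw [hr, hHf]; simp only [map_sub, map_add, map_smul, hZ, hJ]
    have r2 : S2 d r = B (P1 d f) + (S2 d (H (I2 d (S2 d f))) - z • S2 d f) := by
      rw [hr, hHf]; simp only [map_sub, map_add, map_smul, hB, b20 hH]; abel
    have r3 : R (S2 d r) = R (B (P1 d f)) + S2 d f := by
      rw [r2, map_add, hR2]
    have r4 : M (P1 d r - J (R (S2 d r))) + (M (G (P1 d f)) - M (Z (P0 d f))) = P1 d f := by
      rw [← map_sub, ← map_add]
      conv_rhs => rw [← hkey (P1 d f)]
      congr 1
      rw [r1, r3, map_add]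
      abel
    show f = Q (M (P1 d r - J (R (S2 d r)))) + I2 d (R (S2 d r)) +
      (I0 d (P0 d f) + (Q (M (G (P1 d f))) - Q (M (Z (P0 d f)))))
    have r5 : Q (M (P1 d r - J (R (S2 d r)))) + (Q (M (G (P1 d f))) - Q (M (Z (P0 d f))))
        = I1 d (P1 d f) - I2 d (R (B (P1 d f))) := by
      rw [← map_sub, ← map_add, r4, hQ]
    have r6 : I2 d (R (S2 d r)) = I2 d (R (B (P1 d f))) + I2 d (S2 d f) := by
      rw [r3, map_add]
    calc f = I0 d (P0 d f) + I1 d (P1 d f) + I2 d (S2 d f) := decomp f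
      _ = (I1 d (P1 d f) - I2 d (R (B (P1 d f)))) + I2 d (R (S2 d r)) + I0 d (P0 d f) := by
        rw [r6]; abel
      _ = _ := by rw [← r5]; abel

end Parametrix

/-- For every `K ∈ T^d`, `σ(H(K)) \ Σ_K` consists only of isolated
eigenvalues of finite multiplicity, i.e. `σ(H(K)) \ Σ_K ⊆ σ_disc(H(K))`; in particular
`σ_ess(H(K)) ⊆ Σ_K`. -/
theorem spectrum_outside_SigK_discrete
    (d : ℕ) (hd : 1 ≤ d)
    (w₀ v₀ v₁ : Td d → ℝ) (w₁ : Td d → Td d → ℝ) (w₂ : Td d → Td d → Td d → ℝ)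
    (hw₀ : Continuous w₀) (hv₀ : Continuous v₀) (hv₁ : Continuous v₁)
    (hw₁ : Continuous fun x : Td d × Td d => w₁ x.1 x.2)
    (hw₂ : Continuous fun x : Td d × Td d × Td d => w₂ x.1 x.2.1 x.2.2)
    (hsym : ∀ K p q : Td d, w₂ K p q = w₂ K q p)
    (K : Td d) (H : H3 d →L[ℂ] H3 d)
    (hH : IsHamiltonian w₀ v₀ v₁ w₁ w₂ K H) :
    spectrum ℂ H \ SigK v₁ w₁ w₂ K ⊆ discSpec H ∧
    essSpec H ⊆ SigK v₁ w₁ w₂ K := by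
  constructor
  · rintro z ⟨hz, hzS⟩
    obtain ⟨L, C, hC, h⟩ := parametrix hv₁ hw₁ hw₂ hsym hzS hH
    exact disc_of H L C (sa_H hv₁ hH) hC z h hz
  · intro z hz
    by_contra hzS
    obtain ⟨L, C, hC, h⟩ := parametrix hv₁ hw₁ hw₂ hsym hzS hH
    exact not_ess H L C hC z h hz
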